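/- arXiv:1005.3494 — 3 statements merged into one kernel-verified Lean document; each statement's English description precedes it below -/
import Mathlib

section
/- For real $u \ge 1$ and complex $s$ with $\mathrm{Re}(s) > 0$, define $G(u,s) = \int_0^{1/u} \frac{1-e^{-ts}}{t}\,dt$. Then there is an absolute constant $A>0$ such that $|G(u,s)| \le A\,\log(1 + |s|/u)$ for all such $u$ and $s$; moreover $|G(u,s)| \le \int_0^{1/u} \min(|s|, 1/t)\,dt$ up to an absolute constant. -/
open MeasureTheory

/-- `G(u,s) = ∫_0^{1/u} (1 - e^{-ts})/t dt`. -/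
noncomputable def G (u : ℝ) (s : ℂ) : ℂ :=
  ∫ t in (0:ℝ)..(1 / u), (1 - Complex.exp (-(t : ℂ) * s)) / (t : ℂ)

/-! The integrand of `G` is at most `2 * min ‖s‖ t⁻¹` in norm, because `exp` is `1`-Lipschitz and
bounded by `1` on the closed left half-plane. Up to a factor `2`, `min a t⁻¹` is in turn below
`a / (1 + a * t)`, the derivative of `log (1 + a * t)`. -/

theorem norm_exp_le_one_of_re_nonpos {z : ℂ} (hz : z.re ≤ 0) : ‖Complex.exp z‖ ≤ 1 := by
  rwa [Complex.norm_exp, Real.exp_le_one_iff]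

theorem norm_exp_sub_exp_le_of_re_nonpos {z w : ℂ} (hz : z.re ≤ 0) (hw : w.re ≤ 0) :
    ‖Complex.exp z - Complex.exp w‖ ≤ ‖z - w‖ := by
  simpa only [one_mul] using
    (convex_halfSpace_re_le 0).norm_image_sub_le_of_norm_hasDerivWithin_le
      (fun x _ => (Complex.hasDerivAt_exp x).hasDerivWithinAt)
      (fun _ hx => norm_exp_le_one_of_re_nonpos hx) hw hz

theorem norm_one_sub_exp_le_min {z : ℂ} (hz : z.re ≤ 0) :
    ‖1 - Complex.exp z‖ ≤ min ‖z‖ 2 := by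
  refine le_min ?_ ?_
  · simpa only [Complex.exp_zero, zero_sub, norm_neg] using
      norm_exp_sub_exp_le_of_re_nonpos Complex.zero_re.le hz
  · calc ‖1 - Complex.exp z‖ ≤ ‖(1 : ℂ)‖ + ‖Complex.exp z‖ := norm_sub_le _ _
      _ ≤ 1 + 1 := add_le_add norm_one.le (norm_exp_le_one_of_re_nonpos hz)
      _ = 2 := one_add_one_eq_two

theorem norm_one_sub_exp_div_le {s : ℂ} (hs : 0 ≤ s.re) {t : ℝ} (ht : 0 < t) :
    ‖(1 - Complex.exp (-(t : ℂ) * s)) / (t : ℂ)‖ ≤ 2 * min ‖s‖ t⁻¹ := by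
  have hre : (-(t : ℂ) * s).re ≤ 0 := by
    rw [neg_mul, Complex.neg_re, Complex.re_ofReal_mul]
    exact neg_nonpos.mpr (mul_nonneg ht.le hs)
  have hnorm : ‖-(t : ℂ) * s‖ = ‖s‖ * t := by
    rw [norm_mul, norm_neg, Complex.norm_of_nonneg ht.le, mul_comm]
  rw [norm_div, Complex.norm_of_nonneg ht.le, div_le_iff₀ ht]
  calc ‖1 - Complex.exp (-(t : ℂ) * s)‖ ≤ min (‖s‖ * t) 2 :=
        hnorm ▸ norm_one_sub_exp_le_min hre
    _ ≤ min (2 * (‖s‖ * t)) 2 :=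
        min_le_min_right _ (le_mul_of_one_le_left (by positivity) one_le_two)
    _ = 2 * min ‖s‖ t⁻¹ * t := by
      rw [mul_assoc, min_mul_of_nonneg _ _ ht.le, inv_mul_cancel₀ ht.ne',
        mul_min_of_nonneg _ _ zero_le_two, mul_one]

theorem min_inv_le_two_mul_div_one_add_mul {a t : ℝ} (ha : 0 ≤ a) (ht : 0 ≤ t) :
    min a t⁻¹ ≤ 2 * (a / (1 + a * t)) := by
  rw [← mul_div_assoc, le_div_iff₀ (by positivity)]
  calc min a t⁻¹ * (1 + a * t) = min a t⁻¹ + min a t⁻¹ * t * a := by ring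
    _ ≤ a + t⁻¹ * t * a := by
      gcongr
      exacts [min_le_left _ _, min_le_right _ _]
    _ ≤ a + 1 * a := by gcongr; exact inv_mul_le_one
    _ = 2 * a := by ring

theorem intervalIntegrable_min_inv (a : ℝ) {b : ℝ} (hb : 0 ≤ b) :
    IntervalIntegrable (fun t : ℝ => min a t⁻¹) volume 0 b := by
  have hbound : ∀ t : ℝ, 0 < t → ‖min a t⁻¹‖ ≤ |a| := fun t ht =>
    abs_le.mpr ⟨le_min (neg_abs_le a) ((neg_nonpos.mpr (abs_nonneg a)).trans (inv_pos.mpr ht).le),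
      (min_le_left _ _).trans (le_abs_self a)⟩
  refine (intervalIntegrable_const (c := |a|)).mono_fun'
    (Measurable.aestronglyMeasurable (by fun_prop)) ?_
  rw [Set.uIoc_of_le hb]
  exact ae_restrict_of_forall_mem measurableSet_Ioc fun t ht => hbound t ht.1

theorem intervalIntegrable_div_one_add_mul {a b : ℝ} (hab : 0 < 1 + a * b) :
    IntervalIntegrable (fun t : ℝ => a / (1 + a * t)) volume 0 b := by
  have hpos : ∀ t ∈ Set.uIcc 0 b, 0 < 1 + a * t := by
    intro t ht
    rcases Set.mem_uIcc.mp ht with ⟨h0, hb⟩ | ⟨hb, h0⟩ <;> rcases le_total 0 a with ha | ha <;>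
      nlinarith
  exact ContinuousOn.intervalIntegrable
    (continuousOn_const.div (by fun_prop) fun t ht => (hpos t ht).ne')

theorem integral_div_one_add_mul {a b : ℝ} (hab : 0 < 1 + a * b) :
    ∫ t in (0:ℝ)..b, a / (1 + a * t) = Real.log (1 + a * b) := by
  simp only [div_eq_mul_inv]
  rw [intervalIntegral.integral_const_mul,
    intervalIntegral.mul_integral_comp_add_mul (f := fun x : ℝ => x⁻¹), mul_zero, add_zero,
    integral_inv_of_pos one_pos hab, div_one]

theorem integral_min_inv_le_two_mul_log {a b : ℝ} (ha : 0 ≤ a) (hb : 0 ≤ b) :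
    ∫ t in (0:ℝ)..b, min a t⁻¹ ≤ 2 * Real.log (1 + a * b) := by
  have hab : 0 < 1 + a * b := by positivity
  rw [← integral_div_one_add_mul hab, ← intervalIntegral.integral_const_mul]
  exact intervalIntegral.integral_mono_on hb (intervalIntegrable_min_inv a hb)
    ((intervalIntegrable_div_one_add_mul hab).const_mul 2)
    fun t ht => min_inv_le_two_mul_div_one_add_mul ha ht.1

theorem norm_integral_one_sub_exp_div_le {s : ℂ} (hs : 0 ≤ s.re) {b : ℝ} (hb : 0 ≤ b) :
    ‖∫ t in (0:ℝ)..b, (1 - Complex.exp (-(t : ℂ) * s)) / (t : ℂ)‖ ≤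
      2 * ∫ t in (0:ℝ)..b, min ‖s‖ t⁻¹ := by
  rw [← intervalIntegral.integral_const_mul]
  exact intervalIntegral.norm_integral_le_of_norm_le hb
    (.of_forall fun t ht => norm_one_sub_exp_div_le hs ht.1)
    ((intervalIntegrable_min_inv ‖s‖ hb).const_mul 2)

theorem G_bound_general :
    ∃ A : ℝ, 0 < A ∧ ∀ (u : ℝ), 0 < u → ∀ (s : ℂ), 0 ≤ s.re →
      ‖G u s‖ ≤ A * Real.log (1 + ‖s‖ / u) ∧
        ‖G u s‖ ≤ A * ∫ t in (0:ℝ)..(1 / u), min ‖s‖ t⁻¹ := by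
  refine ⟨4, four_pos, fun u hu s hs => ?_⟩
  have hu' : 0 ≤ 1 / u := by positivity
  have hG : ‖G u s‖ ≤ 2 * ∫ t in (0:ℝ)..(1 / u), min ‖s‖ t⁻¹ :=
    norm_integral_one_sub_exp_div_le hs hu'
  have hlog : ∫ t in (0:ℝ)..(1 / u), min ‖s‖ t⁻¹ ≤ 2 * Real.log (1 + ‖s‖ / u) := by
    simpa only [mul_one_div] using integral_min_inv_le_two_mul_log (norm_nonneg s) hu'
  constructor <;> linarith [norm_nonneg (G u s)]

/-- there is an absolute constant `A > 0` such that for all real `u ≥ 1`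
and all complex `s` with `Re s > 0`, `|G(u,s)| ≤ A log(1 + |s|/u)`, and moreover
`|G(u,s)| ≤ A ∫_0^{1/u} min(|s|, 1/t) dt`. -/
theorem G_bound :
    ∃ A : ℝ, 0 < A ∧ ∀ (u : ℝ), 1 ≤ u → ∀ (s : ℂ), 0 < s.re →
      ‖G u s‖ ≤ A * Real.log (1 + ‖s‖ / u) ∧
        ‖G u s‖ ≤ A * ∫ t in (0:ℝ)..(1 / u), min ‖s‖ t⁻¹ := by
  obtain ⟨A, hA, hbound⟩ := G_bound_general
  exact ⟨A, hA, fun u hu s hs => hbound u (one_pos.trans_le hu) s hs.le⟩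
end

section
/- Fix an integer $k \ge 1$ and an integer $j$ with $1 \le j \le k$. For real $u \ge 2$ define $G(u,s) = \int_0^{1/u} \frac{1-e^{-ts}}{t}\,dt$ for $\mathrm{Re}(s)>0$. Then the contour integral $\frac{1}{2\pi i}\int_{1-i\infty}^{1+i\infty} \frac{e^s}{s}\, G(u,s)^j\, (\log u - \log s - \gamma)^{k-j}\,ds$ is $O\big((\log u)^k / u\big)$ as $u \to \infty$. -/
open MeasureTheory Filter Topology Asymptotics

/-!
The inequality `‖1 - e ^ (-z)‖ ≤ 2 ‖z‖ ^ ε`, valid for every `ε ∈ [0, 1]` on the right half-plane,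
gives `‖G u s‖ ≤ (2 / ε) (‖s‖ / u) ^ ε`, and the same bound divided by `‖s‖` for the derivative.
Put `l = log u + O(1)`. Integrating `e ^ s` by parts leaves products of one
factor `G u s / s` or `∂G u s / ∂s` with powers of `G` and of the logarithm. Choosing the exponents
`ε` of the factors so that they add up to `1 - (n + 1) / l` extracts the full `1 / u`,
because `u ^ (1 / l) ≤ e`, and absorbs the growth of the logarithms, because
`‖log s‖ ≲ l ‖s‖ ^ (1 / l)`, while retaining a decay `‖s‖ ^ (-1 / l)`. The integral of
`‖s‖ ^ (-1 - 1 / l)` along the line then costs only one more factor `l`.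
-/

theorem tendsto_intervalIntegral_deriv_mul_of_bounded {A : Type*} [NormedRing A]
    [NormedAlgebra ℝ A] [CompleteSpace A] {v v' f f' : ℝ → A} {M : ℝ}
    (hv : ∀ t, HasDerivAt v (v' t) t) (hf : ∀ t, HasDerivAt f (f' t) t)
    (hv' : Continuous v') (hf' : Integrable f') (hM : ∀ t, ‖v t‖ ≤ M)
    (hf0 : Tendsto f (cocompact ℝ) (𝓝 0)) :
    Tendsto (fun T : ℝ => ∫ t in (-T)..T, v' t * f t) atTop (𝓝 (-∫ t, v t * f' t)) := by
  have hvc : Continuous v := continuous_iff_continuousAt.2 fun t => (hv t).continuousAt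
  have hfc : Continuous f := continuous_iff_continuousAt.2 fun t => (hf t).continuousAt
  have hvf' : Integrable fun t => v t * f' t :=
    hf'.bdd_mul hvc.aestronglyMeasurable (ae_of_all _ hM)
  have hvf : Tendsto (fun t => v t * f t) (cocompact ℝ) (𝓝 0) :=
    isBoundedUnder_le_mul_tendsto_zero (isBoundedUnder_of ⟨M, hM⟩) hf0
  have hparts (T : ℝ) : ∫ t in (-T)..T, v' t * f t =
      v T * f T - v (-T) * f (-T) - ∫ t in (-T)..T, v t * f' t := by
    have hv'f : IntervalIntegrable (fun t => v' t * f t) volume (-T) T :=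
      (hv'.mul hfc).intervalIntegrable _ _
    rw [← intervalIntegral.integral_deriv_mul_eq_sub (fun t _ => hv t) (fun t _ => hf t)
      (hv'.intervalIntegrable _ _) hf'.intervalIntegrable,
      intervalIntegral.integral_add hv'f hvf'.intervalIntegrable, add_sub_cancel_right]
  simp_rw [hparts]
  rw [cocompact_eq_atBot_atTop] at hvf
  simpa using ((hvf.mono_left le_sup_right).sub
    ((hvf.mono_left le_sup_left).comp tendsto_neg_atTop_atBot)).sub
    (intervalIntegral_tendsto_integral hvf' tendsto_neg_atTop_atBot tendsto_id)

theorem integral_one_add_abs_rpow_neg {p : ℝ} (hp : 1 < p) :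
    ∫ t : ℝ, (1 + |t|) ^ (-p) = 2 / (p - 1) := by
  have hshift : ∫ t in Set.Ioi (0 : ℝ), (1 + t) ^ (-p) = ∫ t in Set.Ioi (1 : ℝ), t ^ (-p) := by
    have := (measurePreserving_add_left volume (1 : ℝ)).setIntegral_preimage_emb
      (measurableEmbedding_addLeft (1 : ℝ)) (fun t => t ^ (-p)) (Set.Ioi 1)
    simpa using this
  rw [integral_comp_abs (f := fun r => (1 + r) ^ (-p)), hshift,
    integral_Ioi_rpow_of_lt (by linarith) one_pos, Real.one_rpow, neg_div, ← div_neg]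
  ring

theorem norm_one_sub_exp_neg_le_rpow {z : ℂ} (hz : 0 ≤ z.re) {ε : ℝ} (hε0 : 0 ≤ ε)
    (hε1 : ε ≤ 1) : ‖1 - Complex.exp (-z)‖ ≤ 2 * ‖z‖ ^ ε := by
  have hexp {w : ℂ} (hw : w.re ≤ 0) : ‖Complex.exp w‖ ≤ 1 := by
    rwa [Complex.norm_exp, Real.exp_le_one_iff]
  have hz' : (-z).re ≤ 0 := by simpa using hz
  rcases le_total ‖z‖ 1 with h | h
  · have hlip : ‖1 - Complex.exp (-z)‖ ≤ ‖z‖ := by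
      simpa using (convex_halfSpace_re_le 0).norm_image_sub_le_of_norm_hasDerivWithin_le
        (fun w _ => (Complex.hasDerivAt_exp w).hasDerivWithinAt) (fun w hw => hexp hw) hz'
        (show (0 : ℂ).re ≤ 0 by simp)
    have hpow : ‖z‖ ≤ ‖z‖ ^ ε := by
      simpa using Real.rpow_le_rpow_of_exponent_ge' (norm_nonneg z) h hε0 hε1
    linarith [norm_nonneg z]
  · calc ‖1 - Complex.exp (-z)‖ ≤ ‖(1 : ℂ)‖ + ‖Complex.exp (-z)‖ := norm_sub_le _ _
      _ ≤ 2 := by linarith [hexp hz', norm_one (α := ℂ)]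
      _ ≤ 2 * ‖z‖ ^ ε := by linarith [Real.one_le_rpow h hε0]

theorem norm_one_sub_exp_neg_mul_div_le {t : ℝ} (ht : 0 < t) {s : ℂ} (hs : 0 ≤ s.re) {ε : ℝ}
    (hε0 : 0 ≤ ε) (hε1 : ε ≤ 1) :
    ‖(1 - Complex.exp (-(t : ℂ) * s)) / (t : ℂ)‖ ≤ 2 * ‖s‖ ^ ε * t ^ (ε - 1) := by
  have hts : 0 ≤ ((t : ℂ) * s).re := by
    rw [Complex.re_ofReal_mul]
    positivity
  have h := norm_one_sub_exp_neg_le_rpow hts hε0 hε1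
  rw [norm_mul, Complex.norm_of_nonneg ht.le, Real.mul_rpow ht.le (norm_nonneg s)] at h
  rw [neg_mul, norm_div, Complex.norm_of_nonneg ht.le, div_le_iff₀ ht, Real.rpow_sub_one ht.ne']
  field_simp
  linarith

theorem norm_G_le {u : ℝ} (hu : 0 < u) {s : ℂ} (hs : 0 ≤ s.re) {ε : ℝ} (hε0 : 0 < ε) (hε1 : ε ≤ 1) :
    ‖G u s‖ ≤ 2 / ε * (‖s‖ / u) ^ ε :=
  calc ‖G u s‖ ≤ ∫ t in (0 : ℝ)..(1 / u), 2 * ‖s‖ ^ ε * t ^ (ε - 1) :=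
        intervalIntegral.norm_integral_le_of_norm_le (by positivity)
          (Eventually.of_forall fun t ht => norm_one_sub_exp_neg_mul_div_le ht.1 hs hε0.le hε1)
          ((intervalIntegral.intervalIntegrable_rpow' (by linarith)).const_mul _)
    _ = 2 / ε * (‖s‖ / u) ^ ε := by
        rw [intervalIntegral.integral_const_mul, integral_rpow (.inl (by linarith)),
          sub_add_cancel, Real.zero_rpow hε0.ne', Real.div_rpow zero_le_one hu.le,
          Real.div_rpow (norm_nonneg s) hu.le, Real.one_rpow]
        ring

theorem intervalIntegrable_one_sub_exp_neg_mul_div {u : ℝ} (hu : 0 < u) {s : ℂ}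
    (hs : 0 ≤ s.re) :
    IntervalIntegrable (fun t : ℝ => (1 - Complex.exp (-(t : ℂ) * s)) / (t : ℂ)) volume 0
      (1 / u) := by
  refine (intervalIntegrable_const (c := 2 * ‖s‖)).mono_fun
    (by fun_prop : Measurable _).aestronglyMeasurable ?_
  filter_upwards [ae_restrict_mem measurableSet_uIoc] with t ht
  rw [Set.uIoc_of_le (by positivity)] at ht
  simpa using norm_one_sub_exp_neg_mul_div_le ht.1 hs zero_le_one le_rfl

theorem integral_exp_neg_mul {s : ℂ} (hs : s ≠ 0) (a : ℝ) :
    ∫ t in (0 : ℝ)..a, Complex.exp (-(t : ℂ) * s) = (1 - Complex.exp (-(a * s))) / s := by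
  simp_rw [show ∀ t : ℝ, -(t : ℂ) * s = -s * t from fun t => by ring]
  rw [integral_exp_mul_complex (neg_ne_zero.2 hs), Complex.ofReal_zero, mul_zero,
    Complex.exp_zero, ← neg_sub, neg_div_neg_eq, neg_mul, mul_comm s]

theorem hasDerivAt_G {u : ℝ} (hu : 0 < u) {s : ℂ} (hs : 0 < s.re) :
    HasDerivAt (G u) ((1 - Complex.exp (-(s / u))) / s) s := by
  have hs0 : s ≠ 0 := Complex.ne_zero_of_re_pos hs
  have hsub : Set.uIoc 0 (1 / u) ⊆ Set.Ioi 0 := by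
    rw [Set.uIoc_of_le (by positivity)]
    exact Set.Ioc_subset_Ioi_self
  have hG : HasDerivAt (G u) (∫ t in (0 : ℝ)..(1 / u), Complex.exp (-(t : ℂ) * s)) s := by
    refine (intervalIntegral.hasDerivAt_integral_of_dominated_loc_of_deriv_le
      (F := fun w t => (1 - Complex.exp (-(t : ℂ) * w)) / (t : ℂ))
      (F' := fun w t => Complex.exp (-(t : ℂ) * w)) (bound := fun _ => 1)
      (Complex.continuous_re.isOpen_preimage _ isOpen_Ioi |>.mem_nhds hs)
      (.of_forall fun w => (by fun_prop : Measurable _).aestronglyMeasurable)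
      (intervalIntegrable_one_sub_exp_neg_mul_div hu hs.le)
      (by fun_prop : Measurable _).aestronglyMeasurable
      (.of_forall fun t ht w hw => ?_) intervalIntegrable_const
      (.of_forall fun t ht w _ => ?_)).2
    · have ht0 : 0 < t := hsub ht
      have hw0 : 0 < w.re := hw
      rw [Complex.norm_exp, Real.exp_le_one_iff, neg_mul, Complex.neg_re, Complex.re_ofReal_mul,
        neg_nonpos]
      positivity
    · have ht0 : (t : ℂ) ≠ 0 := Complex.ofReal_ne_zero.2 (hsub ht).ne'
      have := (((hasDerivAt_id w).const_mul (-(t : ℂ))).cexp.const_sub 1).div_const (t : ℂ)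
      refine this.congr_deriv ?_
      simp only [id]
      field_simp
  rw [integral_exp_neg_mul hs0] at hG
  convert hG using 4
  push_cast
  ring

theorem norm_deriv_G_le {u : ℝ} (hu : 0 < u) {s : ℂ} (hs : 0 < s.re) {ε : ℝ} (hε0 : 0 ≤ ε)
    (hε1 : ε ≤ 1) :
    ‖deriv (G u) s‖ ≤ 2 * (‖s‖ / u) ^ ε / ‖s‖ := by
  have hsu : 0 ≤ (s / u).re := by
    rw [Complex.div_ofReal_re]
    positivity
  rw [(hasDerivAt_G hu hs).deriv, norm_div]
  gcongr
  simpa [abs_of_pos hu] using norm_one_sub_exp_neg_le_rpow hsu hε0 hε1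

/-- The factor `log u - log s - γ` of the integrand, with an arbitrary constant `c` in place
of `γ`. -/
noncomputable def logFactor (c : ℂ) (u : ℝ) (s : ℂ) : ℂ :=
  (Real.log u : ℂ) - Complex.log s - c

/-- The integrand of the contour integral without its oscillating factor `e ^ s`. -/
noncomputable def amplitude (c : ℂ) (j n : ℕ) (u : ℝ) (s : ℂ) : ℂ :=
  s⁻¹ * G u s ^ j * logFactor c u s ^ n

-- At `n = 0` the truncated `n - 1` is harmless, as its term carries the coefficient `n`.
theorem hasDerivAt_amplitude (c : ℂ) (i n : ℕ) {u : ℝ} (hu : 0 < u) {s : ℂ} (hs : 0 < s.re) :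
    HasDerivAt (amplitude c (i + 1) n u)
      (((i + 1) * (deriv (G u) s * G u s ^ i * logFactor c u s ^ n)
        - G u s / s * G u s ^ i * logFactor c u s ^ n
        - n * (G u s / s * G u s ^ i * logFactor c u s ^ (n - 1))) / s) s := by
  have hs0 : s ≠ 0 := Complex.ne_zero_of_re_pos hs
  have hG : HasDerivAt (G u) (deriv (G u) s) s :=
    (hasDerivAt_G hu hs).differentiableAt.hasDerivAt
  have hL : HasDerivAt (logFactor c u) (-s⁻¹) s :=
    ((Complex.hasDerivAt_log (.inl hs)).const_sub (Real.log u : ℂ)).sub_const c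
  refine (((hasDerivAt_inv hs0).mul (hG.pow (i + 1))).mul (hL.pow n)).congr_deriv ?_
  simp only [Pi.mul_apply, Pi.pow_apply, Nat.add_sub_cancel, Nat.cast_succ]
  field_simp
  ring

theorem norm_logFactor_le (c : ℂ) {u : ℝ} (hu : 1 ≤ u) {s : ℂ} (hs : 1 ≤ ‖s‖) {l : ℝ}
    (hl : Real.log u + (Real.pi + ‖c‖) ≤ l) :
    ‖logFactor c u s‖ ≤ 2 * l * ‖s‖ ^ l⁻¹ := by
  have hu0 : 0 ≤ Real.log u := Real.log_nonneg hu
  have hl0 : 0 < l := by linarith [Real.pi_pos, norm_nonneg c]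
  have hlog : ‖Complex.log s‖ ≤ Real.log ‖s‖ + Real.pi := by
    calc ‖Complex.log s‖ ≤ |(Complex.log s).re| + |(Complex.log s).im| :=
          Complex.norm_le_abs_re_add_abs_im _
      _ ≤ Real.log ‖s‖ + Real.pi := by
          rw [Complex.log_re, Complex.log_im, abs_of_nonneg (Real.log_nonneg hs)]
          gcongr
          exact Complex.abs_arg_le_pi s
  have hrpow : Real.log ‖s‖ ≤ l * ‖s‖ ^ l⁻¹ := by
    simpa [mul_comm] using Real.log_le_rpow_div (norm_nonneg s) (inv_pos.2 hl0)
  have hone : l ≤ l * ‖s‖ ^ l⁻¹ :=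
    le_mul_of_one_le_right hl0.le (Real.one_le_rpow hs (inv_nonneg.2 hl0.le))
  calc ‖logFactor c u s‖ ≤ ‖(Real.log u : ℂ)‖ + ‖Complex.log s‖ + ‖c‖ :=
        (norm_sub_le _ _).trans (by gcongr; exact norm_sub_le _ _)
    _ ≤ Real.log u + (Real.log ‖s‖ + Real.pi) + ‖c‖ := by
        rw [Complex.norm_of_nonneg hu0]
        gcongr
    _ ≤ 2 * l * ‖s‖ ^ l⁻¹ := by linarith

theorem norm_logFactor_pow_le (c : ℂ) {m n : ℕ} (hmn : m ≤ n) {u : ℝ} (hu : 1 ≤ u) {s : ℂ}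
    (hs : 1 ≤ ‖s‖) {l : ℝ} (hl : Real.log u + (Real.pi + ‖c‖) ≤ l) :
    ‖logFactor c u s‖ ^ m ≤ (2 * l * ‖s‖ ^ l⁻¹) ^ n := by
  have hl1 : 1 ≤ l := by linarith [Real.log_nonneg hu, Real.pi_gt_three, norm_nonneg c]
  have hone : 1 ≤ 2 * l * ‖s‖ ^ l⁻¹ :=
    one_le_mul_of_one_le_of_one_le (by linarith) (Real.one_le_rpow hs (by positivity))
  calc ‖logFactor c u s‖ ^ m ≤ (2 * l * ‖s‖ ^ l⁻¹) ^ m := by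
        gcongr
        exact norm_logFactor_le c hu hs hl
    _ ≤ (2 * l * ‖s‖ ^ l⁻¹) ^ n := pow_le_pow_right₀ hone hmn

theorem rpow_inv_le_exp_one {u l : ℝ} (hu : 0 < u) (hl0 : 0 < l) (hl : Real.log u ≤ l) :
    u ^ l⁻¹ ≤ Real.exp 1 := by
  rw [Real.rpow_def_of_pos hu, Real.exp_le_exp, ← div_eq_mul_inv]
  exact (div_le_one hl0).2 hl

theorem interpolated_product_eq {x u δ ε θ : ℝ} (hx : 0 < x) (hu : 0 < u) (i n : ℕ)
    (hexp : ε + θ * i = 1 - δ * (n + 1 : ℕ)) :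
    (x / u) ^ ε / x * ((x / u) ^ θ) ^ i * (x ^ δ) ^ n = (u ^ δ) ^ (n + 1) / u * x ^ (-δ) := by
  have hy : 0 < x / u := by positivity
  have hpow : (x / u) ^ ε * ((x / u) ^ θ) ^ i = x / u / (x ^ δ / u ^ δ) ^ (n + 1) := by
    rw [← Real.rpow_mul_natCast hy.le, ← Real.rpow_add hy, hexp, Real.rpow_sub hy,
      Real.rpow_one, Real.rpow_mul_natCast hy.le, Real.div_rpow hx.le hu.le]
  rw [div_mul_eq_mul_div, hpow, Real.rpow_neg hx.le]
  field_simp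
  rw [div_pow, div_mul_cancel₀ _ (by positivity), pow_succ']

theorem interpolationExponent_mem_Icc (i n : ℕ) {l : ℝ} (hl : 4 * (n + 1) ≤ l) :
    1 - l⁻¹ * (n + 1 : ℕ) - 1 / (2 * (i + 1)) * i ∈ Set.Icc (1 / 4 : ℝ) 1 := by
  have hl0 : 0 < l := lt_of_lt_of_le (by positivity) hl
  have hlog : l⁻¹ * (n + 1 : ℕ) ≤ 1 / 4 := by
    rw [inv_mul_le_iff₀ hl0]
    push_cast
    linarith
  have hpow : (1 / (2 * (i + 1)) * i : ℝ) ≤ 1 / 2 := by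
    rw [div_mul_eq_mul_div, div_le_div_iff₀ (by positivity) two_pos]
    linarith
  have hlog0 : 0 ≤ l⁻¹ * (n + 1 : ℕ) := by positivity
  have hpow0 : (0 : ℝ) ≤ 1 / (2 * (i + 1)) * i := by positivity
  constructor <;> linarith

/-- The constant in the bounds for `amplitude c (i + 1) n` and its derivative: `8` comes from
`2 / ε` with `ε ≥ 1 / 4`, then one factor for each of `G ^ i`, `logFactor ^ n` and
`(u ^ l⁻¹) ^ (n + 1)`. -/
noncomputable def amplitudeConst (i n : ℕ) : ℝ :=
  8 * (4 * (i + 1)) ^ i * 2 ^ n * Real.exp 1 ^ (n + 1)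

-- The exponents of the `i` factors sum to at most `1 / 2`, leaving the rest to one more factor.
theorem norm_G_pow_le (i : ℕ) {u : ℝ} (hu : 0 < u) {s : ℂ} (hs : 0 ≤ s.re) :
    ‖G u s‖ ^ i ≤ (4 * (i + 1)) ^ i * ((‖s‖ / u) ^ (1 / (2 * (i + 1)) : ℝ)) ^ i := by
  have hθ : 1 / (2 * (i + 1)) ≤ (1 : ℝ) := by
    rw [div_le_one (by positivity)]
    linarith [(Nat.cast_nonneg i : (0 : ℝ) ≤ i)]
  have hG := norm_G_le hu hs (by positivity) hθ
  rw [div_div_eq_mul_div, div_one, ← mul_assoc, show (2 * 2 : ℝ) = 4 by norm_num] at hG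
  rw [← mul_pow]
  gcongr

section Amplitude

variable (c : ℂ) (i : ℕ) {n : ℕ} {u : ℝ} (hu : 1 ≤ u) {s : ℂ} (hs : 1 ≤ s.re) {l : ℝ}
  (hl : Real.log u + (Real.pi + ‖c‖) ≤ l) (hln : 4 * (n + 1) ≤ l)
include hu hs hl hln

theorem norm_mul_G_pow_mul_logFactor_pow_le {m : ℕ} (hmn : m ≤ n) {h : ℂ}
    (hh : ∀ ε : ℝ, 0 < ε → ε ≤ 1 → ‖h‖ ≤ 2 / ε * (‖s‖ / u) ^ ε / ‖s‖) :
    ‖h * G u s ^ i * logFactor c u s ^ m‖ ≤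
      amplitudeConst i n * (l ^ n / u) * ‖s‖ ^ (-l⁻¹) := by
  have hu0 : 0 < u := by linarith
  have hx : 1 ≤ ‖s‖ := hs.trans (Complex.re_le_norm s)
  have hl0 : 0 < l := lt_of_lt_of_le (by positivity) hln
  obtain ⟨hε4, hε1⟩ := interpolationExponent_mem_Icc i n hln
  set ε : ℝ := 1 - l⁻¹ * (n + 1 : ℕ) - 1 / (2 * (i + 1)) * i
  have hh8 : ‖h‖ ≤ 8 * ((‖s‖ / u) ^ ε / ‖s‖) := by
    refine (hh ε (by linarith) hε1).trans ?_
    rw [mul_div_assoc]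
    gcongr
    rw [div_le_iff₀] <;> linarith
  calc ‖h * G u s ^ i * logFactor c u s ^ m‖
      = ‖h‖ * ‖G u s‖ ^ i * ‖logFactor c u s‖ ^ m := by simp only [norm_mul, norm_pow]
    _ ≤ 8 * ((‖s‖ / u) ^ ε / ‖s‖)
          * ((4 * (i + 1)) ^ i * ((‖s‖ / u) ^ (1 / (2 * (i + 1)) : ℝ)) ^ i)
          * (2 * l * ‖s‖ ^ l⁻¹) ^ n := by
        gcongr
        · exact norm_G_pow_le i hu0 (by linarith)
        · exact norm_logFactor_pow_le c hmn hu hx hl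
    _ = 8 * (4 * (i + 1)) ^ i * (2 * l) ^ n
          * ((‖s‖ / u) ^ ε / ‖s‖ * ((‖s‖ / u) ^ (1 / (2 * (i + 1)) : ℝ)) ^ i
            * (‖s‖ ^ l⁻¹) ^ n) := by
        rw [mul_pow (2 * l)]
        ring
    _ = 8 * (4 * (i + 1)) ^ i * (2 * l) ^ n * ((u ^ l⁻¹) ^ (n + 1) / u * ‖s‖ ^ (-l⁻¹)) := by
        rw [interpolated_product_eq (by linarith) hu0 i n (sub_add_cancel _ _)]
    _ ≤ 8 * (4 * (i + 1)) ^ i * (2 * l) ^ n * (Real.exp 1 ^ (n + 1) / u * ‖s‖ ^ (-l⁻¹)) := by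
        gcongr
        exact rpow_inv_le_exp_one hu0 hl0 (by linarith [Real.pi_pos, norm_nonneg c])
    _ = amplitudeConst i n * (l ^ n / u) * ‖s‖ ^ (-l⁻¹) := by
        rw [amplitudeConst, mul_pow]
        ring

theorem norm_G_div_mul_G_pow_mul_logFactor_pow_le {m : ℕ} (hmn : m ≤ n) :
    ‖G u s / s * G u s ^ i * logFactor c u s ^ m‖ ≤
      amplitudeConst i n * (l ^ n / u) * ‖s‖ ^ (-l⁻¹) :=
  norm_mul_G_pow_mul_logFactor_pow_le c i hu hs hl hln hmn fun ε hε0 hε1 => by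
    rw [norm_div]
    gcongr
    exact norm_G_le (by linarith) (by linarith) hε0 hε1

theorem norm_amplitude_le :
    ‖amplitude c (i + 1) n u s‖ ≤ amplitudeConst i n * (l ^ n / u) * ‖s‖ ^ (-l⁻¹) := by
  convert norm_G_div_mul_G_pow_mul_logFactor_pow_le c i hu hs hl hln le_rfl using 2
  rw [amplitude]
  ring

theorem norm_deriv_amplitude_le :
    ‖deriv (amplitude c (i + 1) n u) s‖ ≤
      (i + n + 2) * (amplitudeConst i n * (l ^ n / u) * ‖s‖ ^ (-l⁻¹)) / ‖s‖ := by
  have hu0 : 0 < u := by linarith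
  have hs0 : 0 < s.re := by linarith
  set B := amplitudeConst i n * (l ^ n / u) * ‖s‖ ^ (-l⁻¹)
  have hinv : ‖G u s / s * G u s ^ i * logFactor c u s ^ n‖ ≤ B :=
    norm_G_div_mul_G_pow_mul_logFactor_pow_le c i hu hs hl hln le_rfl
  have hlog : ‖G u s / s * G u s ^ i * logFactor c u s ^ (n - 1)‖ ≤ B :=
    norm_G_div_mul_G_pow_mul_logFactor_pow_le c i hu hs hl hln (Nat.sub_le n 1)
  have hG : ‖deriv (G u) s * G u s ^ i * logFactor c u s ^ n‖ ≤ B :=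
    norm_mul_G_pow_mul_logFactor_pow_le c i hu hs hl hln le_rfl fun ε hε0 hε1 =>
      (norm_deriv_G_le hu0 hs0 hε0.le hε1).trans <| by
        gcongr
        exact le_div_self zero_le_two hε0 hε1
  rw [(hasDerivAt_amplitude c i n hu0 hs0).deriv, norm_div]
  gcongr
  calc _ ≤ ‖(i + 1 : ℂ)‖ * ‖deriv (G u) s * G u s ^ i * logFactor c u s ^ n‖
          + ‖G u s / s * G u s ^ i * logFactor c u s ^ n‖
          + ‖(n : ℂ)‖ * ‖G u s / s * G u s ^ i * logFactor c u s ^ (n - 1)‖ := by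
        rw [← norm_mul, ← norm_mul]
        exact (norm_sub_le _ _).trans (by gcongr; exact norm_sub_le _ _)
    _ ≤ (i + 1) * B + B + n * B := by
        rw [← Nat.cast_succ, Complex.norm_natCast, Complex.norm_natCast, Nat.cast_succ]
        gcongr
    _ = (i + n + 2) * B := by ring

end Amplitude

section VerticalLine

theorem one_add_abs_div_two_le_norm (t : ℝ) : (1 + |t|) / 2 ≤ ‖1 + (t : ℂ) * Complex.I‖ := by
  have hre : 1 ≤ ‖1 + (t : ℂ) * Complex.I‖ := by
    simpa using Complex.abs_re_le_norm (1 + (t : ℂ) * Complex.I)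
  have him : |t| ≤ ‖1 + (t : ℂ) * Complex.I‖ := by
    simpa using Complex.abs_im_le_norm (1 + (t : ℂ) * Complex.I)
  linarith

theorem norm_one_add_mul_I_rpow_neg_le {p : ℝ} (hp0 : 0 ≤ p) (hp2 : p ≤ 2) (t : ℝ) :
    ‖1 + (t : ℂ) * Complex.I‖ ^ (-p) ≤ 4 * (1 + |t|) ^ (-p) := by
  have htwo : (2 : ℝ) ^ p ≤ 4 :=
    (Real.rpow_le_rpow_of_exponent_le one_le_two hp2).trans_eq (by norm_num)
  calc ‖1 + (t : ℂ) * Complex.I‖ ^ (-p) ≤ ((1 + |t|) / 2) ^ (-p) :=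
        Real.rpow_le_rpow_of_nonpos (by positivity) (one_add_abs_div_two_le_norm t) (by linarith)
    _ = 2 ^ p * (1 + |t|) ^ (-p) := by
        rw [Real.div_rpow (by positivity) zero_le_two, Real.rpow_neg zero_le_two, div_inv_eq_mul,
          mul_comm]
    _ ≤ 4 * (1 + |t|) ^ (-p) := by gcongr

theorem tendsto_norm_one_add_mul_I_cocompact :
    Tendsto (fun t : ℝ => ‖1 + (t : ℂ) * Complex.I‖) (cocompact ℝ) atTop := by
  refine tendsto_atTop_mono one_add_abs_div_two_le_norm ?_
  exact (tendsto_atTop_add_const_left _ _ (tendsto_norm_cocompact_atTop (E := ℝ))).atTop_div_const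
    two_pos

theorem hasDerivAt_one_add_mul_I (t : ℝ) :
    HasDerivAt (fun t : ℝ => 1 + (t : ℂ) * Complex.I) Complex.I t := by
  simpa using ((Complex.ofRealCLM.hasDerivAt (x := t)).mul_const Complex.I).const_add 1

theorem norm_exp_one_add_mul_I (t : ℝ) :
    ‖Complex.exp (1 + (t : ℂ) * Complex.I)‖ = Real.exp 1 := by
  simp [Complex.norm_exp]

/-- The scale `l` replacing `log u`: it stays above `4 * (n + 1)` for all `u ≥ 1`, so that the
exponents in `interpolationExponent_mem_Icc` are admissible down to `u = 1`. -/
noncomputable def logScale (c : ℂ) (n : ℕ) (u : ℝ) : ℝ :=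
  Real.log u + (Real.pi + ‖c‖ + 4 * (n + 1))

variable (c : ℂ) (i n : ℕ)

theorem log_add_le_logScale (u : ℝ) :
    Real.log u + (Real.pi + ‖c‖) ≤ logScale c n u := by
  rw [logScale]
  linarith [(Nat.cast_nonneg n : (0 : ℝ) ≤ n)]

theorem four_mul_le_logScale {u : ℝ} (hu : 1 ≤ u) : 4 * (n + 1) ≤ logScale c n u := by
  rw [logScale]
  linarith [Real.log_nonneg hu, Real.pi_pos, norm_nonneg c]

theorem one_le_logScale {u : ℝ} (hu : 1 ≤ u) : 1 ≤ logScale c n u := by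
  linarith [four_mul_le_logScale c n hu, (Nat.cast_nonneg n : (0 : ℝ) ≤ n)]

theorem logScale_isBigO_log : logScale c n =O[atTop] Real.log :=
  (isBigO_refl _ _).add (Real.isLittleO_const_log_atTop).isBigO

theorem tendsto_amplitude_one_add_mul_I {u : ℝ} (hu : 1 ≤ u) :
    Tendsto (fun t : ℝ => amplitude c (i + 1) n u (1 + t * Complex.I)) (cocompact ℝ) (𝓝 0) := by
  have hl : 0 < (logScale c n u)⁻¹ := inv_pos.2 (by linarith [one_le_logScale c n hu])
  have hdecay := ((tendsto_rpow_neg_atTop hl).comp tendsto_norm_one_add_mul_I_cocompact).const_mul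
    (amplitudeConst i n * (logScale c n u ^ n / u))
  rw [mul_zero] at hdecay
  exact squeeze_zero_norm (fun t => norm_amplitude_le c i hu (by simp)
    (log_add_le_logScale c n u) (four_mul_le_logScale c n hu)) hdecay

theorem norm_deriv_amplitude_one_add_mul_I_le {u : ℝ} (hu : 1 ≤ u) (t : ℝ) :
    ‖deriv (amplitude c (i + 1) n u) (1 + t * Complex.I)‖ ≤
      4 * (i + n + 2) * amplitudeConst i n * (logScale c n u ^ n / u)
        * (1 + |t|) ^ (-(1 + (logScale c n u)⁻¹)) := by
  have hl1 := one_le_logScale c n hu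
  have hC : 0 ≤ amplitudeConst i n := by
    rw [amplitudeConst]
    positivity
  have hnorm : 0 < ‖1 + (t : ℂ) * Complex.I‖ :=
    lt_of_lt_of_le (by positivity) (one_add_abs_div_two_le_norm t)
  have hderiv := norm_deriv_amplitude_le c i hu (s := 1 + t * Complex.I) (by simp)
    (log_add_le_logScale c n u) (four_mul_le_logScale c n hu)
  set l := logScale c n u
  have hinv : l⁻¹ ≤ 1 := inv_le_one_of_one_le₀ hl1
  calc ‖deriv (amplitude c (i + 1) n u) (1 + t * Complex.I)‖
      ≤ (i + n + 2) * (amplitudeConst i n * (l ^ n / u)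
          * ‖1 + (t : ℂ) * Complex.I‖ ^ (-l⁻¹)) / ‖1 + (t : ℂ) * Complex.I‖ := hderiv
    _ = (i + n + 2) * amplitudeConst i n * (l ^ n / u)
          * ‖1 + (t : ℂ) * Complex.I‖ ^ (-(1 + l⁻¹)) := by
        rw [show -(1 + l⁻¹) = -l⁻¹ - 1 by ring, Real.rpow_sub_one hnorm.ne']
        ring
    _ ≤ (i + n + 2) * amplitudeConst i n * (l ^ n / u) * (4 * (1 + |t|) ^ (-(1 + l⁻¹))) := by
        gcongr
        exact norm_one_add_mul_I_rpow_neg_le (by positivity) (by linarith) t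
    _ = _ := by ring

theorem integrable_deriv_amplitude {u : ℝ} (hu : 1 ≤ u) :
    Integrable fun t : ℝ =>
      deriv (amplitude c (i + 1) n u) (1 + t * Complex.I) * Complex.I := by
  have hl : 0 < (logScale c n u)⁻¹ := inv_pos.2 (by linarith [one_le_logScale c n hu])
  have hmaj : Integrable fun t : ℝ => (1 + |t|) ^ (-(1 + (logScale c n u)⁻¹)) :=
    integrable_one_add_norm (by simpa using hl)
  exact ((hmaj.const_mul _).mono'
    ((measurable_deriv _).comp (by fun_prop)).aestronglyMeasurable
    (ae_of_all _ (norm_deriv_amplitude_one_add_mul_I_le c i n hu))).mul_const _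

theorem norm_integral_exp_mul_deriv_amplitude_le {u : ℝ} (hu : 1 ≤ u) :
    ‖∫ t : ℝ, Complex.exp (1 + t * Complex.I)
        * (deriv (amplitude c (i + 1) n u) (1 + t * Complex.I) * Complex.I)‖ ≤
      8 * Real.exp 1 * (i + n + 2) * amplitudeConst i n * (logScale c n u ^ (n + 1) / u) := by
  have hbound := norm_deriv_amplitude_one_add_mul_I_le c i n hu
  have hl1 := one_le_logScale c n hu
  set l := logScale c n u
  have hl : 0 < l⁻¹ := by positivity
  set K := 4 * (i + n + 2) * amplitudeConst i n * (l ^ n / u)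
  have hmaj : Integrable fun t : ℝ => (1 + |t|) ^ (-(1 + l⁻¹)) :=
    integrable_one_add_norm (by simpa using hl)
  calc _ ≤ ∫ t : ℝ, Real.exp 1 * (K * (1 + |t|) ^ (-(1 + l⁻¹))) := by
        refine norm_integral_le_of_norm_le ((hmaj.const_mul K).const_mul _)
          (ae_of_all _ fun t => ?_)
        rw [norm_mul, norm_mul, norm_exp_one_add_mul_I, Complex.norm_I, mul_one]
        gcongr
        exact hbound t
    _ = Real.exp 1 * (K * (2 * l)) := by
        rw [integral_const_mul, integral_const_mul,
          integral_one_add_abs_rpow_neg (lt_add_of_pos_right 1 hl), add_sub_cancel_left,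
          div_inv_eq_mul]
    _ = _ := by
        simp only [K]
        ring

theorem tendsto_intervalIntegral_exp_mul_amplitude {u : ℝ} (hu : 1 ≤ u) :
    Tendsto (fun T : ℝ => ∫ t in (-T)..T, Complex.exp (1 + t * Complex.I) * Complex.I
        * amplitude c (i + 1) n u (1 + t * Complex.I)) atTop
      (𝓝 (-∫ t : ℝ, Complex.exp (1 + t * Complex.I)
        * (deriv (amplitude c (i + 1) n u) (1 + t * Complex.I) * Complex.I))) := by
  refine tendsto_intervalIntegral_deriv_mul_of_bounded
    (fun t => (hasDerivAt_one_add_mul_I t).cexp) (fun t => ?_) (by fun_prop)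
    (integrable_deriv_amplitude c i n hu) (fun t => (norm_exp_one_add_mul_I t).le)
    (tendsto_amplitude_one_add_mul_I c i n hu)
  have hu0 : 0 < u := by linarith
  have hre : 0 < (1 + (t : ℂ) * Complex.I).re := by simp
  exact (hasDerivAt_amplitude c i n hu0 hre).differentiableAt.hasDerivAt.comp t
    (hasDerivAt_one_add_mul_I t)

end VerticalLine

theorem isBigO_log_pow_div {m n : ℕ} (hmn : m ≤ n) :
    (fun u : ℝ => Real.log u ^ m / u) =O[atTop] fun u => Real.log u ^ n / u := by
  refine IsBigO.of_bound' ?_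
  filter_upwards [eventually_gt_atTop 0, Real.tendsto_log_atTop.eventually_ge_atTop 1]
    with u hu hlog
  rw [Real.norm_of_nonneg (by positivity), Real.norm_of_nonneg (by positivity)]
  gcongr

theorem error_term_bound_general (c : ℂ) {j : ℕ} (hj : 1 ≤ j) (n : ℕ) :
    ∃ V : ℝ → ℂ,
      (∀ u : ℝ, 1 ≤ u →
        Tendsto (fun T : ℝ =>
            (1 / (2 * Real.pi * Complex.I)) *
              ∫ t in (-T)..T,
                (Complex.exp (1 + t * Complex.I) / (1 + t * Complex.I)) *
                  G u (1 + t * Complex.I) ^ j *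
                  ((Real.log u : ℂ) - Complex.log (1 + t * Complex.I) - c) ^ n * Complex.I)
          atTop (𝓝 (V u))) ∧
      V =O[atTop] fun u : ℝ => Real.log u ^ (n + 1) / u := by
  obtain ⟨i, rfl⟩ := Nat.exists_eq_add_of_le' hj
  refine ⟨fun u => (1 / (2 * Real.pi * Complex.I)) *
    -∫ t : ℝ, Complex.exp (1 + t * Complex.I)
      * (deriv (amplitude c (i + 1) n u) (1 + t * Complex.I) * Complex.I),
    fun u hu => ?_, ?_⟩
  · refine ((tendsto_intervalIntegral_exp_mul_amplitude c i n hu).const_mul _).congr fun T => ?_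
    congr! 3 with t
    rw [amplitude, logFactor]
    ring
  · have hscale : (fun u => logScale c n u ^ (n + 1) / u) =O[atTop]
        fun u => Real.log u ^ (n + 1) / u :=
      ((logScale_isBigO_log c n).pow (n + 1)).mul (isBigO_refl _ _)
    refine (IsBigO.trans ?_ hscale).const_mul_left _
    refine (IsBigO.of_bound (8 * Real.exp 1 * (i + n + 2) * amplitudeConst i n) ?_).neg_left
    filter_upwards [eventually_ge_atTop 1] with u hu
    have hl := one_le_logScale c n hu
    rw [Real.norm_of_nonneg (by positivity)]
    exact norm_integral_exp_mul_deriv_amplitude_le c i n hu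

/-- for fixed `k ≥ 1` and `1 ≤ j ≤ k`, the contour integral
`(1/(2πi)) ∫_{1-i∞}^{1+i∞} (e^s/s) G(u,s)^j (log u - log s - γ)^{k-j} ds`
(symmetric limit, defined for `u ≥ 2`) is `O((log u)^k/u)` as `u → ∞`. -/
theorem error_term_bound (k j : ℕ) (hk : 1 ≤ k) (hj1 : 1 ≤ j) (hjk : j ≤ k) :
    ∃ V : ℝ → ℂ,
      (∀ u : ℝ, 2 ≤ u →
        Tendsto (fun T : ℝ =>
            (1 / (2 * Real.pi * Complex.I)) *
              ∫ t in (-T)..T,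
                (Complex.exp (1 + t * Complex.I) / (1 + t * Complex.I)) *
                  G u (1 + t * Complex.I) ^ j *
                  ((Real.log u : ℂ) - Complex.log (1 + t * Complex.I) -
                    (Real.eulerMascheroniConstant : ℂ)) ^ (k - j) * Complex.I)
          atTop (𝓝 (V u))) ∧
      V =O[atTop] fun u : ℝ => Real.log u ^ k / u := by
  obtain ⟨V, hlim, hV⟩ := error_term_bound_general Real.eulerMascheroniConstant hj1 (k - j)
  exact ⟨V, fun u hu => hlim u (one_le_two.trans hu),
    hV.trans (isBigO_log_pow_div (by omega))⟩
end

section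
/- For any $c > 0$ and any real $\lambda$, the conditionally convergent integral $\frac{1}{2\pi i}\int_{c-i\infty}^{c+i\infty} \frac{e^{\lambda s}}{s}\,ds$, interpreted as $\lim_{T\to\infty}\frac{1}{2\pi i}\int_{c-iT}^{c+iT}\frac{e^{\lambda s}}{s}\,ds$, equals $1$ if $\lambda > 0$, equals $0$ if $\lambda < 0$, and equals $1/2$ if $\lambda = 0$. -/
open MeasureTheory Filter Topology

/-!
Write `P(l, T)` for the integral of `exp (l * z) / z` along the segment from `c - iT` to `c + iT`,
taken with respect to the ordinate. If `l < 0`, the segment can be pushed to `Re z = ∞`, where the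
integrand decays exponentially; only the horizontal edges remain, and they contribute `O(1 / T)`.
For arbitrary `l`, the substitution `z ↦ -z` identifies `-P(-l, T)` with the integral of
`exp (l * z) / z` along `Re z = -c`, so the residue theorem for the strip between the two lines
gives `P(l, T) + P(-l, T) → 2π`. Together these two limits settle all three cases.

For the residue theorem, split `f z / z = (f z - f 0) / z + f 0 / z`. The first term is holomorphic
across `0`, so by Cauchy's theorem its integrals along the two lines differ by `o(1)`; the second is
explicit, since `1 / z` integrates to `2 arctan (T / σ)` along `Re z = σ`.
-/

section VerticalIntegral

open Set Complex Bornology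

variable {E : Type*} [NormedAddCommGroup E] {f g : ℂ → E} {a b l M σ T : ℝ}

lemma intervalIntegrable_vertical (hf : ContinuousOn f (re ⁻¹' {σ})) :
    IntervalIntegrable (fun t : ℝ => f (σ + t * I)) volume a b :=
  (hf.comp_continuous (by fun_prop) fun t => by simp).intervalIntegrable _ _

lemma le_norm_add_mul_I_of_abs_eq {x y : ℝ} (hy : |y| = |T|) : T ≤ ‖(x + y * I : ℂ)‖ :=
  calc T ≤ |y| := hy ▸ le_abs_self T
    _ = |(x + y * I : ℂ).im| := by simp
    _ ≤ ‖(x + y * I : ℂ)‖ := abs_im_le_norm _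

lemma tendsto_zero_cobounded_inf_principal_iff {V : Type*} [SeminormedAddCommGroup V]
    {f : V → E} {s : Set V} :
    Tendsto f (cobounded V ⊓ 𝓟 s) (𝓝 0) ↔
      ∀ ε > 0, ∃ R, ∀ z ∈ s, R ≤ ‖z‖ → ‖f z‖ ≤ ε := by
  rw [(hasBasis_cobounded_norm.inf_principal s).tendsto_iff Metric.nhds_basis_closedBall]
  simp only [mem_inter_iff, mem_ofPred_eq, mem_closedBall_zero_iff, true_and, and_imp]
  exact forall₂_congr fun _ _ => exists_congr fun _ => forall_congr' fun _ => forall_comm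

variable [NormedSpace ℂ E]

/-- The integral of `f` along the vertical segment from `σ - iT` to `σ + iT` with respect to the
ordinate `t`. Since `dz = i dt`, the contour integral is `I` times this. -/
noncomputable def verticalIntegral (f : ℂ → E) (σ T : ℝ) : E :=
  ∫ t in (-T)..T, f (σ + t * I)

lemma verticalIntegral_comp_neg (f : ℂ → E) (σ T : ℝ) :
    verticalIntegral (fun z => f (-z)) σ T = verticalIntegral f (-σ) T := by
  have h := intervalIntegral.integral_comp_neg (a := -T) (b := T)
    fun t : ℝ => f ((-σ : ℝ) + t * I)
  rw [neg_neg] at h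
  rw [verticalIntegral, verticalIntegral, ← h]
  congr! 3
  push_cast
  ring

lemma norm_verticalIntegral_le (hM : ∀ t ∈ uIoc (-T) T, ‖f (σ + t * I)‖ ≤ M) :
    ‖verticalIntegral f σ T‖ ≤ M * |2 * T| := by
  have h := intervalIntegral.norm_integral_le_of_norm_le_const hM
  rwa [sub_neg_eq_add, ← two_mul] at h

lemma I_smul_verticalIntegral_sub (hab : a ≤ b) (hf : DifferentiableOn ℂ f (re ⁻¹' Icc a b)) :
    I • (verticalIntegral f b T - verticalIntegral f a T) =
      (∫ x in a..b, f (x + T * I)) - ∫ x in a..b, f (x + (-T : ℝ) * I) := by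
  have h := integral_boundary_rect_eq_zero_of_differentiableOn f
    (a + (-T : ℝ) * I) (b + T * I)
    (hf.mono fun z hz => by simpa [uIcc_of_le hab] using hz.1)
  simp only [add_re, add_im, ofReal_re, ofReal_im, mul_re, mul_im, I_re, I_im, mul_zero, mul_one,
    sub_zero, add_zero, zero_add] at h
  rw [smul_sub, ← sub_eq_zero, ← h, verticalIntegral, verticalIntegral]
  abel

lemma norm_verticalIntegral_sub_le {φ : ℝ → ℝ} (hab : a ≤ b)
    (hf : DifferentiableOn ℂ f (re ⁻¹' Icc a b)) (hφ : IntervalIntegrable φ volume a b)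
    (hfφ : ∀ x ∈ Icc a b, ∀ y, |y| = |T| → ‖f (x + y * I)‖ ≤ φ x) :
    ‖verticalIntegral f b T - verticalIntegral f a T‖ ≤ 2 * ∫ x in a..b, φ x := by
  have edge (y : ℝ) (hy : |y| = |T|) : ‖∫ x in a..b, f (x + y * I)‖ ≤ ∫ x in a..b, φ x :=
    intervalIntegral.norm_integral_le_of_norm_le hab
      (.of_forall fun x hx => hfφ x (Ioc_subset_Icc_self hx) y hy) hφ
  calc ‖verticalIntegral f b T - verticalIntegral f a T‖
      = ‖I • (verticalIntegral f b T - verticalIntegral f a T)‖ := by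
        rw [norm_smul, norm_I, one_mul]
    _ ≤ ‖∫ x in a..b, f (x + T * I)‖ + ‖∫ x in a..b, f (x + (-T : ℝ) * I)‖ := by
        rw [I_smul_verticalIntegral_sub hab hf]
        exact norm_sub_le _ _
    _ ≤ 2 * ∫ x in a..b, φ x := by
        rw [two_mul]
        exact add_le_add (edge T rfl) (edge (-T) (abs_neg T))

lemma tendsto_verticalIntegral_sub_zero (hab : a ≤ b)
    (hf : DifferentiableOn ℂ f (re ⁻¹' Icc a b))
    (hf₀ : Tendsto f (cobounded ℂ ⊓ 𝓟 (re ⁻¹' Icc a b)) (𝓝 0)) :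
    Tendsto (fun T => verticalIntegral f b T - verticalIntegral f a T) atTop (𝓝 0) := by
  refine Metric.nhds_basis_closedBall.tendsto_right_iff.2 fun ε hε => ?_
  obtain ⟨δ, hδ, hδε⟩ : ∃ δ > 0, 2 * ((b - a) * δ) ≤ ε := by
    have width_nonneg : 0 ≤ b - a := sub_nonneg.2 hab
    refine ⟨ε / (2 * (b - a + 1)), by positivity, ?_⟩
    field_simp
    linarith
  obtain ⟨R, hR⟩ := tendsto_zero_cobounded_inf_principal_iff.1 hf₀ δ hδ
  filter_upwards [eventually_ge_atTop R] with T hT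
  have h := norm_verticalIntegral_sub_le (T := T) (φ := fun _ => δ) hab hf
    intervalIntegrable_const fun x hx y hy =>
      hR _ (by simpa using hx) (hT.trans (le_norm_add_mul_I_of_abs_eq hy))
  rw [intervalIntegral.integral_const, smul_eq_mul] at h
  exact mem_closedBall_zero_iff.2 (h.trans hδε)

section Jordan

lemma norm_exp_ofReal_mul (l : ℝ) (z : ℂ) : ‖exp (l * z)‖ = Real.exp (l * z.re) := by
  rw [norm_exp, re_ofReal_mul]

lemma integral_exp_mul (hl : l ≠ 0) :
    ∫ x in a..b, Real.exp (l * x) = (Real.exp (l * b) - Real.exp (l * a)) / l := by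
  rw [intervalIntegral.integral_comp_mul_left _ hl, integral_exp, smul_eq_mul, inv_mul_eq_div]

lemma norm_verticalIntegral_exp_smul_le (hl : l < 0)
    (hg : DifferentiableOn ℂ g (re ⁻¹' Ici σ))
    (hM : ∀ z ∈ re ⁻¹' Ici σ, T ≤ ‖z‖ → ‖g z‖ ≤ M) :
    ‖verticalIntegral (fun z => exp (l * z) • g z) σ T‖ ≤ 2 * (M * (-Real.exp (l * σ) / l)) := by
  set F : ℂ → E := fun z => exp (l * z) • g z
  have hF : DifferentiableOn ℂ F (re ⁻¹' Ici σ) := by fun_prop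
  have norm_F_le {z : ℂ} (hz : σ ≤ z.re) (hTz : T ≤ ‖z‖) :
      ‖F z‖ ≤ M * Real.exp (l * z.re) := by
    rw [norm_smul, norm_exp_ofReal_mul, mul_comm]
    exact mul_le_mul_of_nonneg_right (hM z hz hTz) (Real.exp_pos _).le
  have bound : ∀ᶠ b in atTop, ‖verticalIntegral F σ T‖ ≤ M * Real.exp (l * b) * |2 * T| +
      2 * (M * ((Real.exp (l * b) - Real.exp (l * σ)) / l)) := by
    filter_upwards [eventually_ge_atTop σ, eventually_ge_atTop T] with b hσb hTb
    have far : ‖verticalIntegral F b T‖ ≤ M * Real.exp (l * b) * |2 * T| :=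
      norm_verticalIntegral_le fun t _ => by
        have hTz : T ≤ ‖(b + t * I : ℂ)‖ :=
          hTb.trans <| by simpa using re_le_norm (b + t * I : ℂ)
        simpa using norm_F_le (by simpa using hσb) hTz
    have shift := norm_verticalIntegral_sub_le (T := T) hσb
      (hF.mono (preimage_mono Icc_subset_Ici_self))
      (φ := fun x => M * Real.exp (l * x)) (Continuous.intervalIntegrable (by fun_prop) _ _)
      fun x hx y hy => by
        simpa using norm_F_le (by simpa using hx.1) (le_norm_add_mul_I_of_abs_eq (x := x) hy)
    rw [intervalIntegral.integral_const_mul, integral_exp_mul hl.ne] at shift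
    exact (norm_le_norm_add_norm_sub _ _).trans (add_le_add far shift)
  have exp_lim : Tendsto (fun b => Real.exp (l * b)) atTop (𝓝 0) :=
    Real.tendsto_exp_atBot.comp (tendsto_id.const_mul_atTop_of_neg hl)
  refine ge_of_tendsto ?_ bound
  simpa using ((exp_lim.const_mul M).mul_const |2 * T|).add
    ((((exp_lim.sub_const (Real.exp (l * σ))).div_const l).const_mul M).const_mul 2)

lemma tendsto_verticalIntegral_exp_smul (hl : l < 0)
    (hg : DifferentiableOn ℂ g (re ⁻¹' Ici σ))
    (hg₀ : Tendsto g (cobounded ℂ ⊓ 𝓟 (re ⁻¹' Ici σ)) (𝓝 0)) :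
    Tendsto (verticalIntegral (fun z => exp (l * z) • g z) σ) atTop (𝓝 0) := by
  refine Metric.nhds_basis_closedBall.tendsto_right_iff.2 fun ε hε => ?_
  have hC : 0 < -Real.exp (l * σ) / l := div_pos_of_neg_of_neg (neg_neg_of_pos (Real.exp_pos _)) hl
  obtain ⟨R, hR⟩ := tendsto_zero_cobounded_inf_principal_iff.1 hg₀
    (ε / (2 * (-Real.exp (l * σ) / l))) (by positivity)
  filter_upwards [eventually_ge_atTop R] with T hT
  have h := norm_verticalIntegral_exp_smul_le hl hg fun z hz hTz => hR z hz (hT.trans hTz)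
  rw [mul_left_comm, div_mul_cancel₀ ε (mul_pos two_pos hC).ne'] at h
  exact mem_closedBall_zero_iff.2 h

end Jordan

section Residue

open scoped Real

lemma ofReal_add_mul_I_ne_zero (hσ : σ ≠ 0) (t : ℝ) : (σ + t * I : ℂ) ≠ 0 :=
  fun h => hσ (by simpa using congrArg re h)

lemma continuousOn_inv_re_preimage (hσ : σ ≠ 0) :
    ContinuousOn (fun z : ℂ => z⁻¹) (re ⁻¹' {σ}) :=
  continuousOn_inv₀.mono fun z hz h => hσ <| by
    rw [← show z.re = σ from hz, show z = 0 from h, zero_re]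

lemma inv_add_inv_conj (t : ℝ) :
    (σ + t * I : ℂ)⁻¹ + (σ + (-t : ℝ) * I : ℂ)⁻¹ = ((2 * (σ / (σ ^ 2 + t ^ 2)) : ℝ) : ℂ) := by
  apply Complex.ext
  · rw [ofReal_re]
    simp [normSq_apply]
    ring
  · rw [ofReal_im]
    simp [normSq_apply]
    ring

lemma verticalIntegral_inv (hσ : σ ≠ 0) (T : ℝ) :
    verticalIntegral (fun z => z⁻¹) σ T = (2 * Real.arctan (T / σ) : ℝ) := by
  have hint := intervalIntegrable_vertical (a := -T) (b := T) (continuousOn_inv_re_preimage hσ)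
  have hint_neg : IntervalIntegrable (fun t : ℝ => (σ + (-t : ℝ) * I : ℂ)⁻¹) volume (-T) T := by
    simpa using (hint.comp_sub_left 0).symm
  have reflect : verticalIntegral (fun z => z⁻¹) σ T =
      ∫ t in (-T)..T, (σ + (-t : ℝ) * I : ℂ)⁻¹ := by
    have h := intervalIntegral.integral_comp_neg (a := -T) (b := T)
      fun t : ℝ => (σ + t * I : ℂ)⁻¹
    rw [neg_neg] at h
    exact h.symm
  have double : 2 * verticalIntegral (fun z => z⁻¹) σ T = 2 * (2 * Real.arctan (T / σ) : ℝ) :=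
    calc 2 * verticalIntegral (fun z => z⁻¹) σ T
        = ∫ t in (-T)..T, ((σ + t * I : ℂ)⁻¹ + (σ + (-t : ℝ) * I : ℂ)⁻¹) := by
          rw [intervalIntegral.integral_add hint hint_neg, ← reflect, two_mul, verticalIntegral]
      _ = ((2 * ∫ t in (-T)..T, σ / (σ ^ 2 + t ^ 2) : ℝ) : ℂ) := by
          simp only [inv_add_inv_conj, intervalIntegral.integral_ofReal,
            intervalIntegral.integral_const_mul]
      _ = 2 * (2 * Real.arctan (T / σ) : ℝ) := by
          rw [integral_div_sq_add_sq, neg_div, Real.arctan_neg]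
          push_cast
          ring
  exact mul_left_cancel₀ two_ne_zero double

lemma tendsto_verticalIntegral_inv (hσ : 0 < σ) :
    Tendsto (verticalIntegral (fun z => z⁻¹) σ) atTop (𝓝 (π : ℂ)) := by
  have h : Tendsto (fun T => 2 * Real.arctan (T / σ)) atTop (𝓝 (2 * (π / 2))) :=
    ((Real.tendsto_arctan_atTop.mono_right nhdsWithin_le_nhds).comp
      (tendsto_id.atTop_div_const hσ)).const_mul 2
  rw [mul_div_cancel₀ π two_ne_zero] at h
  exact (continuous_ofReal.tendsto π).comp h |>.congr fun T => (verticalIntegral_inv hσ.ne' T).symm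

lemma tendsto_verticalIntegral_inv_of_neg (hσ : σ < 0) :
    Tendsto (verticalIntegral (fun z => z⁻¹) σ) atTop (𝓝 (-π : ℂ)) := by
  refine (tendsto_verticalIntegral_inv (neg_pos.2 hσ)).neg.congr fun T => ?_
  rw [verticalIntegral_inv hσ.ne, verticalIntegral_inv (neg_pos.2 hσ).ne', div_neg, Real.arctan_neg]
  simp

lemma dslope_zero_of_ne {z : ℂ} (f : ℂ → E) (hz : z ≠ 0) :
    dslope f 0 z = z⁻¹ • f z - z⁻¹ • f 0 := by
  rw [dslope_of_ne f hz, slope_def_module, sub_zero, smul_sub]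

lemma verticalIntegral_dslope [CompleteSpace E] (hσ : σ ≠ 0) (hf : ContinuousOn f (re ⁻¹' {σ})) :
    verticalIntegral (dslope f 0) σ T =
      verticalIntegral (fun z => z⁻¹ • f z) σ T - verticalIntegral (fun z => z⁻¹) σ T • f 0 := by
  have hinv := continuousOn_inv_re_preimage hσ
  simp only [verticalIntegral, dslope_zero_of_ne f (ofReal_add_mul_I_ne_zero hσ _)]
  rw [← intervalIntegral.integral_smul_const]
  exact intervalIntegral.integral_sub (intervalIntegrable_vertical (hinv.smul hf))
    (intervalIntegrable_vertical (hinv.smul continuousOn_const))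

lemma tendsto_dslope_zero_cobounded {s : Set ℂ}
    (hf : Tendsto (fun z => z⁻¹ • f z) (cobounded ℂ ⊓ 𝓟 s) (𝓝 0)) :
    Tendsto (dslope f 0) (cobounded ℂ ⊓ 𝓟 s) (𝓝 0) := by
  have hinv : Tendsto (fun z : ℂ => z⁻¹ • f 0) (cobounded ℂ ⊓ 𝓟 s) (𝓝 0) := by
    simpa using ((tendsto_inv₀_cobounded (α := ℂ)).mono_left inf_le_left).smul_const (f 0)
  have hne : ∀ᶠ z : ℂ in cobounded ℂ ⊓ 𝓟 s, z ≠ 0 :=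
    (eventually_ne_cobounded 0).filter_mono inf_le_left
  rw [← sub_zero (0 : E)]
  exact (hf.sub hinv).congr' (hne.mono fun z hz => (dslope_zero_of_ne f hz).symm)

lemma tendsto_verticalIntegral_inv_smul_sub [CompleteSpace E] (ha : a < 0) (hb : 0 < b)
    (hf : DifferentiableOn ℂ f (re ⁻¹' Icc a b))
    (hf₀ : Tendsto (fun z => z⁻¹ • f z) (cobounded ℂ ⊓ 𝓟 (re ⁻¹' Icc a b)) (𝓝 0)) :
    Tendsto (fun T => verticalIntegral (fun z => z⁻¹ • f z) b T -
      verticalIntegral (fun z => z⁻¹ • f z) a T) atTop (𝓝 ((2 * π : ℂ) • f 0)) := by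
  have hab : a ≤ b := (ha.trans hb).le
  have strip_mem : re ⁻¹' Icc a b ∈ 𝓝 (0 : ℂ) :=
    continuous_re.continuousAt.preimage_mem_nhds (Icc_mem_nhds ha hb)
  have dslope_lim := tendsto_verticalIntegral_sub_zero hab
    ((differentiableOn_dslope strip_mem).2 hf) (tendsto_dslope_zero_cobounded hf₀)
  have inv_lim := ((tendsto_verticalIntegral_inv hb).sub
    (tendsto_verticalIntegral_inv_of_neg ha)).smul_const (f 0)
  have line {σ : ℝ} (hσ : σ ∈ Icc a b) : ContinuousOn f (re ⁻¹' {σ}) :=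
    hf.continuousOn.mono (preimage_mono (singleton_subset_iff.2 hσ))
  convert! dslope_lim.add inv_lim using 2 with T
  · rw [verticalIntegral_dslope hb.ne' (line ⟨hab, le_rfl⟩),
      verticalIntegral_dslope ha.ne (line ⟨le_rfl, hab⟩), sub_smul]
    abel
  · rw [zero_add, sub_neg_eq_add, two_mul]

end Residue

end VerticalIntegral

section Perron

open Set Complex Bornology
open scoped Real

variable {c l : ℝ}

/-- The truncated integral of Perron's formula along `Re z = c`, with respect to the ordinate;
the normalization `1 / (2π)` is left out. -/
noncomputable def perronIntegral (l c T : ℝ) : ℂ :=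
  verticalIntegral (fun z => exp (l * z) / z) c T

lemma tendsto_perronIntegral_of_neg (hc : 0 < c) (hl : l < 0) :
    Tendsto (perronIntegral l c) atTop (𝓝 0) :=
  tendsto_verticalIntegral_exp_smul (g := fun z => z⁻¹) hl
    (differentiableOn_inv.mono fun _ hz => ne_of_mem_of_not_mem hz (by simpa using hc))
    (tendsto_inv₀_cobounded.mono_left inf_le_left)

lemma perronIntegral_neg_abscissa (l c T : ℝ) :
    perronIntegral l (-c) T = -perronIntegral (-l) c T := by
  rw [perronIntegral, ← verticalIntegral_comp_neg]
  simp only [perronIntegral, verticalIntegral, div_neg, intervalIntegral.integral_neg, mul_neg,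
    ofReal_neg, neg_mul]

lemma isBoundedUnder_exp_strip (l a b : ℝ) :
    IsBoundedUnder (· ≤ ·) (𝓟 (re ⁻¹' Icc a b)) fun z => ‖exp (l * z)‖ := by
  obtain ⟨M, hM⟩ := isCompact_Icc.bddAbove_image
    (f := fun x => Real.exp (l * x)) (K := Icc a b) (by fun_prop)
  exact ⟨M, eventually_map.2 (eventually_principal.2 fun z hz => by
    rw [norm_exp_ofReal_mul]
    exact hM (mem_image_of_mem _ hz))⟩

lemma tendsto_perronIntegral_add_neg (hc : 0 < c) (l : ℝ) :
    Tendsto (fun T => perronIntegral l c T + perronIntegral (-l) c T) atTop (𝓝 (2 * π : ℂ)) := by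
  have decay : Tendsto (fun z : ℂ => z⁻¹ • exp (l * z))
      (cobounded ℂ ⊓ 𝓟 (re ⁻¹' Icc (-c) c)) (𝓝 0) :=
    (tendsto_inv₀_cobounded.mono_left inf_le_left).zero_smul_isBoundedUnder_le
      ((isBoundedUnder_exp_strip l (-c) c).mono inf_le_right)
  have h := tendsto_verticalIntegral_inv_smul_sub (neg_neg_of_pos hc) hc
    (f := fun z => exp (l * z)) (by fun_prop) decay
  simp only [smul_eq_mul, inv_mul_eq_div, mul_zero, exp_zero, mul_one] at h
  refine h.congr fun T => ?_
  rw [← sub_neg_eq_add, ← perronIntegral_neg_abscissa, perronIntegral, perronIntegral]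

lemma tendsto_perronIntegral_of_pos (hc : 0 < c) (hl : 0 < l) :
    Tendsto (perronIntegral l c) atTop (𝓝 (2 * π : ℂ)) := by
  simpa using (tendsto_perronIntegral_add_neg hc l).sub
    (tendsto_perronIntegral_of_neg hc (neg_neg_of_pos hl))

lemma tendsto_perronIntegral_zero (hc : 0 < c) :
    Tendsto (perronIntegral 0 c) atTop (𝓝 (π : ℂ)) := by
  simpa [← two_mul] using (tendsto_perronIntegral_add_neg hc 0).div_const 2

end Perron

/-- Perron's formula: for `c > 0` and real `λ`,
`(1/(2πi)) ∫_{c-i∞}^{c+i∞} e^{λs}/s ds` (symmetric limit) equals `1` if `λ > 0`,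
`0` if `λ < 0`, and `1/2` if `λ = 0`. -/
theorem perron_formula (c : ℝ) (hc : 0 < c) (l : ℝ) :
    Tendsto (fun T : ℝ =>
        (1 / (2 * Real.pi * Complex.I)) *
          ∫ t in (-T)..T,
            (Complex.exp ((l : ℂ) * ((c : ℂ) + t * Complex.I)) /
              ((c : ℂ) + t * Complex.I)) * Complex.I)
      atTop (𝓝 (if 0 < l then (1 : ℂ) else if l < 0 then 0 else 1 / 2)) := by
  have normalize (T : ℝ) : 1 / (2 * Real.pi) * perronIntegral l c T =
      (1 / (2 * Real.pi * Complex.I)) *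
        ∫ t in (-T)..T,
          (Complex.exp ((l : ℂ) * ((c : ℂ) + t * Complex.I)) /
            ((c : ℂ) + t * Complex.I)) * Complex.I := by
    rw [intervalIntegral.integral_mul_const]
    change _ = _ * (perronIntegral l c T * Complex.I)
    field_simp
  have two_pi_ne_zero : (2 * Real.pi : ℂ) ≠ 0 := by exact_mod_cast Real.two_pi_pos.ne'
  suffices h : Tendsto (perronIntegral l c) atTop
      (𝓝 (2 * Real.pi * if 0 < l then (1 : ℂ) else if l < 0 then 0 else 1 / 2)) by
    convert! (h.const_mul (1 / (2 * Real.pi : ℂ))).congr normalize using 2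
    rw [one_div (2 * Real.pi : ℂ), inv_mul_cancel_left₀ two_pi_ne_zero]
  rcases lt_trichotomy l 0 with hl | rfl | hl
  · simpa [hl, hl.not_gt] using tendsto_perronIntegral_of_neg hc hl
  · simpa [mul_right_comm _ (Real.pi : ℂ)] using tendsto_perronIntegral_zero hc
  · simpa [hl] using tendsto_perronIntegral_of_pos hc hl
end
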